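/- Under the MS-LS model with α_i + α_j = α for all pairs i, j, for every integer m ≥ 1 and state k the m-th factorial moment of the nodal strength satisfies G̃_k^{(m)}(1) = E[Y_t(Y_t−1)⋯(Y_t−m+1) | s_t = k] = Σ_{h ∈ H_i} binom(m; h) e^{αm} (σ_k²)^{−d/2} (1/σ_k² + Σ_{j ∈ N_i} τ_{kj}^{−1})^{−d/2} ∏_{j ∈ N_i} (1/(2βh_j))^{d/2} τ_{kj}^{−d/2}, where τ_{kj} = σ_k² + 1/(2βh_j), H_i is the set of multi-indices h = (h_j)_{j≠i} of nonnegative integers with Σ_{j≠i} h_j = m, binom(m; h) = m!/∏_{j≠i} h_j! is the multinomial coefficient, and N_i = {j ≠ i : h_j > 0}. -/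

import Mathlib

open MeasureTheory ProbabilityTheory Real

noncomputable section

/-- Density of the centered isotropic Gaussian `N(0, σ² I_d)` on `ℝ^d`. -/
def gaussPdf (d : ℕ) (σ2 : ℝ) (x : EuclideanSpace ℝ (Fin d)) : ℝ :=
  (2 * Real.pi * σ2) ^ (-(d : ℝ) / 2) * Real.exp (-‖x‖ ^ 2 / (2 * σ2))

/-- The centered isotropic Gaussian measure `N(0, σ² I_d)` on `ℝ^d`. -/
def gaussMeasure (d : ℕ) (σ2 : ℝ) : Measure (EuclideanSpace ℝ (Fin d)) :=
  volume.withDensity fun x => ENNReal.ofReal (gaussPdf d σ2 x)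

/-- Unordered pairs of distinct nodes, represented as ordered pairs `(i, j)` with `i < j`. -/
abbrev Pairs (N : ℕ) : Type := {p : Fin N × Fin N // p.1 < p.2}

/-- Joint law of the latent positions `(Z_i)_{i}` (i.i.d. `N(0, σ² I_d)`) and of the
edge weights `(Y_{ij})_{i<j}`, which given the latent positions are conditionally independent
Poisson variables with intensity `exp (α_i + α_j - β ‖Z_i - Z_j‖²)`. -/
def jointLaw (d N : ℕ) (β : ℝ) (α : Fin N → ℝ) (σ2 : ℝ) :
    Measure ((Fin N → EuclideanSpace ℝ (Fin d)) × (Pairs N → ℕ)) :=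
  (volume.withDensity fun z : Fin N → EuclideanSpace ℝ (Fin d) =>
      ENNReal.ofReal (∏ i, gaussPdf d σ2 (z i))).bind fun z =>
    (Measure.pi fun p : Pairs N =>
        poissonMeasure
          (Real.exp (α p.1.1 + α p.1.2 - β * ‖z p.1.1 - z p.1.2‖ ^ 2)).toNNReal).map
      fun y => (z, y)

/-- The Markov-switching latent space (MS-LS) network model: a hidden `K`-state Markov chain
`s`, state-dependent i.i.d. Gaussian latent positions `Z`, and symmetric edge weights `Y`
that conditionally on the current state (and given the latent positions) are independent
Poisson variables with log-intensity `α i + α j - β ‖Z i k - Z j k‖²`. -/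
structure MSLS (Ω : Type) [MeasurableSpace Ω] where
  /-- the underlying probability measure -/
  P : Measure Ω
  isProb : IsProbabilityMeasure P
  /-- the dimension of the latent space -/
  d : ℕ
  /-- the number of nodes -/
  N : ℕ
  /-- the number of states of the hidden Markov chain -/
  K : ℕ
  β : ℝ
  β_pos : 0 < β
  /-- individual effects -/
  α : Fin N → ℝ
  /-- state-specific variances of the latent positions -/
  σ2 : Fin K → ℝ
  σ2_pos : ∀ k, 0 < σ2 k
  /-- transition probabilities of the hidden Markov chain -/
  q : Fin K → Fin K → ℝ
  q_nonneg : ∀ l k, 0 ≤ q l k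
  q_sum : ∀ l, ∑ k, q l k = 1
  /-- the hidden Markov chain -/
  s : ℕ → Ω → Fin K
  s_meas : ∀ t, Measurable (s t)
  /-- the latent positions in each state -/
  Z : Fin N → Fin K → Ω → EuclideanSpace ℝ (Fin d)
  Z_meas : ∀ i k, Measurable (Z i k)
  /-- the edge weights -/
  Y : Fin N → Fin N → ℕ → Ω → ℕ
  Y_meas : ∀ i j t, Measurable (Y i j t)
  Y_symm : ∀ i j t ω, Y i j t ω = Y j i t ω
  state_pos : ∀ t k, P {ω | s t ω = k} ≠ 0
  /-- Markov transition probabilities -/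
  trans_prob : ∀ t l k, ((P[|{ω | s t ω = l}]) {ω | s (t + 1) ω = k}).toReal = q l k
  /-- conditionally on the current state, the latent positions and the edge weights follow
  the Poisson latent space law -/
  cond_law_state : ∀ t k,
    (P[|{ω | s t ω = k}]).map
        (fun ω => ((fun i => Z i k ω), fun p : Pairs N => Y p.1.1 p.1.2 t ω)) =
      jointLaw d N β α (σ2 k)
  /-- conditionally on the previous and current state, the latent positions and the edge
  weights follow the Poisson latent space law of the current state -/
  cond_law_pair : ∀ t l k, q l k ≠ 0 →
    (P[|{ω | s t ω = l} ∩ {ω | s (t + 1) ω = k}]).map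
        (fun ω => ((fun i => Z i k ω), fun p : Pairs N => Y p.1.1 p.1.2 (t + 1) ω)) =
      jointLaw d N β α (σ2 k)

attribute [instance] MSLS.isProb

/-- The nodal strength `Y_{it} = Σ_{j ≠ i} Y_{ijt}` of node `i` at time `t`. -/
def MSLS.strength {Ω : Type} [MeasurableSpace Ω] (M : MSLS Ω) (i : Fin M.N) (t : ℕ)
    (ω : Ω) : ℕ :=
  ∑ j ∈ Finset.univ.erase i, M.Y i j t ω

end

/-- Multinomial Vandermonde identity for falling factorials. -/
theorem Nat.descFactorial_sum {n : ℕ} (i : Fin n) (x : Fin n → ℕ) (m : ℕ) :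
    (∑ j ∈ Finset.univ.erase i, x j).descFactorial m =
      ∑ h ∈ (Finset.Nat.antidiagonalTuple n m).filter (fun h => h i = 0),
        Nat.multinomial (Finset.univ.erase i) h *
          ∏ j ∈ Finset.univ.erase i, (x j).descFactorial (h j) := by
  have hchoose : (∑ j ∈ Finset.univ.erase i, x j).choose m =
      ∑ h ∈ (Finset.Nat.antidiagonalTuple n m).filter (fun h => h i = 0),
        ∏ j ∈ Finset.univ.erase i, (x j).choose (h j) := by
    have h1 := PowerSeries.coeff_prod
      (fun j : Fin n => (((1 + Polynomial.X) ^ x j : Polynomial ℕ) : PowerSeries ℕ)) m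
      (Finset.univ.erase i)
    have h2 : (∏ j ∈ Finset.univ.erase i,
        (((1 + Polynomial.X) ^ x j : Polynomial ℕ) : PowerSeries ℕ)) =
        (((1 + Polynomial.X) ^ (∑ j ∈ Finset.univ.erase i, x j) : Polynomial ℕ) :
          PowerSeries ℕ) := by
      push_cast
      rw [Finset.prod_pow_eq_pow_sum]
    simp only [h2, Polynomial.coeff_coe, Polynomial.coeff_one_add_X_pow, Nat.cast_id] at h1
    rw [h1]
    refine Finset.sum_bij (fun l _ => ⇑l) ?_ (fun _ _ _ _ h => DFunLike.coe_injective h) ?_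
      (fun _ _ => rfl)
    · intro l hl
      rw [Finset.mem_finsuppAntidiag] at hl
      have hi : l i = 0 := by
        by_contra hne
        exact absurd (hl.2 (Finsupp.mem_support_iff.2 hne)) (by simp)
      rw [Finset.mem_filter, Finset.Nat.mem_antidiagonalTuple]
      refine ⟨?_, hi⟩
      rw [← Finset.add_sum_erase _ _ (Finset.mem_univ i), hi, zero_add]
      exact hl.1
    · intro h hh
      rw [Finset.mem_filter, Finset.Nat.mem_antidiagonalTuple] at hh
      refine ⟨Finsupp.equivFunOnFinite.symm h, ?_, by simp⟩
      rw [Finset.mem_finsuppAntidiag]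
      constructor
      · rw [← hh.1, ← Finset.add_sum_erase _ _ (Finset.mem_univ i), hh.2, zero_add]
        rfl
      · intro j hj
        simp only [Finsupp.mem_support_iff, Finsupp.equivFunOnFinite_symm_apply_apply] at hj
        simp only [Finset.mem_erase, Finset.mem_univ, and_true]
        rintro rfl
        exact hj hh.2
  rw [Nat.descFactorial_eq_factorial_mul_choose, hchoose, Finset.mul_sum]
  refine Finset.sum_congr rfl fun h hh => ?_
  rw [Finset.mem_filter, Finset.Nat.mem_antidiagonalTuple,
    ← Finset.add_sum_erase _ _ (Finset.mem_univ i)] at hh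
  have hsum : ∑ j ∈ Finset.univ.erase i, h j = m := by simpa [hh.2] using hh.1
  simp_rw [Nat.descFactorial_eq_factorial_mul_choose, Finset.prod_mul_distrib]
  rw [← hsum, ← Nat.multinomial_spec]
  ring

/-- The factorial moments of a Poisson distribution are the powers of its rate. -/
theorem lintegral_descFactorial_poissonMeasure (r : NNReal) (m : ℕ) :
    ∫⁻ n, (n.descFactorial m : ENNReal) ∂poissonMeasure r = (r : ENNReal) ^ m := by
  rw [lintegral_countable']
  have hterm : ∀ n : ℕ, (n.descFactorial m : ENNReal) * poissonMeasure r {n} =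
      ENNReal.ofReal (n.descFactorial m * (Real.exp (-r) * r ^ n / n.factorial)) := by
    intro n
    rw [poissonMeasure_singleton, ENNReal.ofReal_mul (by positivity), ENNReal.ofReal_natCast]
  simp_rw [hterm]
  have hs : HasSum (fun n : ℕ =>
      (n.descFactorial m : ℝ) * (Real.exp (-r) * r ^ n / n.factorial)) ((r : ℝ) ^ m) := by
    rw [← hasSum_nat_add_iff' m, Finset.sum_eq_zero, sub_zero]
    · have h := (hasSum_one_poissonMeasure r).mul_left ((r : ℝ) ^ m)
      rw [mul_one] at h
      refine h.congr_fun fun n => ?_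
      have hf : (n.factorial : ℝ) * ((n + m).descFactorial m : ℝ) = (n + m).factorial := by
        have := Nat.factorial_mul_descFactorial (Nat.le_add_left m n)
        rw [Nat.add_sub_cancel] at this
        exact_mod_cast this
      rw [← hf]
      have h1 : (n.factorial : ℝ) ≠ 0 := by positivity
      have h2 : ((n + m).descFactorial m : ℝ) ≠ 0 := by
        intro h0
        rw [h0, mul_zero] at hf
        exact (Nat.cast_ne_zero.2 (Nat.factorial_ne_zero _)) hf.symm
      field_simp
      ring
    · intro n hn
      rw [Nat.descFactorial_eq_zero_iff_lt.2 (Finset.mem_range.1 hn)]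
      simp
  rw [← ENNReal.ofReal_tsum_of_nonneg (fun n => by positivity) hs.summable, hs.tsum_eq,
    ENNReal.ofReal_pow r.coe_nonneg, ENNReal.ofReal_coe_nnreal]

/-- Tonelli's theorem for a product of functions of the individual coordinates. -/
theorem lintegral_pi_prod {ι : Type*} [Fintype ι] {E : ι → Type*} [∀ p, MeasurableSpace (E p)]
    (μ : ∀ p, Measure (E p)) [∀ p, IsProbabilityMeasure (μ p)] {f : ∀ p, E p → ENNReal}
    (hf : ∀ p, Measurable (f p)) :
    ∫⁻ y, ∏ p, f p (y p) ∂Measure.pi μ = ∏ p, ∫⁻ n, f p n ∂μ p := by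
  have hind : iIndepFun (fun p (y : ∀ p, E p) => f p (y p)) (Measure.pi μ) :=
    iIndepFun_pi (X := f) (fun p => (hf p).aemeasurable)
  rw [lintegral_prod_eq_prod_lintegral_of_indepFun Finset.univ _ hind
    (fun p => (hf p).comp (measurable_pi_apply p))]
  refine Finset.prod_congr rfl fun p _ => ?_
  exact (measurePreserving_eval μ p).lintegral_comp (hf p)

theorem measurable_pi_poissonMeasure_map {α ι : Type*} [MeasurableSpace α] [Fintype ι]
    (r : α → ι → NNReal) (hr : ∀ p, Measurable fun z => r z p) :
    Measurable fun z =>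
      (Measure.pi fun p => poissonMeasure (r z p)).map fun y : ι → ℕ => (z, y) := by
  refine Measure.measurable_of_measurable_coe _ fun s hs => ?_
  have key : ∀ z, ((Measure.pi fun p => poissonMeasure (r z p)).map
      fun y : ι → ℕ => (z, y)) s =
      ∑' y : ι → ℕ, s.indicator (fun _ => (1 : ENNReal)) (z, y) *
        ∏ p, ENNReal.ofReal
          (Real.exp (-(r z p)) * (r z p : ℝ) ^ y p / (y p).factorial) := by
    intro z
    rw [← lintegral_indicator_one hs,
      lintegral_map (measurable_one.indicator hs) (measurable_of_countable _),
      lintegral_countable']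
    refine tsum_congr fun y => ?_
    rw [Measure.pi_singleton]
    simp_rw [poissonMeasure_singleton]
    rfl
  simp_rw [key]
  refine Measurable.tsum fun y => ?_
  refine Measurable.mul ?_ ?_
  · exact (measurable_const.indicator hs).comp (measurable_id.prodMk measurable_const)
  · refine Finset.measurable_prod _ fun p _ => ?_
    have := (hr p).coe_nnreal_real
    fun_prop

theorem lintegral_exp_neg_mul_sq_norm (d : ℕ) {b : ℝ} (hb : 0 < b) :
    ∫⁻ v : EuclideanSpace ℝ (Fin d), ENNReal.ofReal (Real.exp (-b * ‖v‖ ^ 2)) =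
      ENNReal.ofReal ((π / b) ^ ((d : ℝ) / 2)) := by
  have h := GaussianFourier.integral_rexp_neg_mul_sq_norm (V := EuclideanSpace ℝ (Fin d)) hb
  rw [finrank_euclideanSpace_fin] at h
  have hint : Integrable (fun v : EuclideanSpace ℝ (Fin d) => Real.exp (-b * ‖v‖ ^ 2)) := by
    by_contra hni
    rw [integral_undef hni] at h
    have : 0 < (π / b) ^ ((d : ℝ) / 2) := by positivity
    exact this.ne h
  rw [← h, ofReal_integral_eq_lintegral_ofReal hint (ae_of_all _ fun v => (Real.exp_pos _).le)]

theorem gaussPdf_nonneg (d : ℕ) {σ2 : ℝ} (hσ : 0 < σ2) (x : EuclideanSpace ℝ (Fin d)) :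
    0 ≤ gaussPdf d σ2 x := by
  unfold gaussPdf
  positivity

theorem measurable_gaussPdf (d : ℕ) (σ2 : ℝ) : Measurable (gaussPdf d σ2) := by
  unfold gaussPdf
  fun_prop

theorem lintegral_gaussPdf_mul_exp (d : ℕ) {σ2 c : ℝ} (hσ : 0 < σ2) (hc : 0 ≤ c) :
    ∫⁻ x, ENNReal.ofReal (gaussPdf d σ2 x) * ENNReal.ofReal (Real.exp (-(c * ‖x‖ ^ 2) / 2)) =
      ENNReal.ofReal (σ2 ^ (-(d : ℝ) / 2) * (1 / σ2 + c) ^ (-(d : ℝ) / 2)) := by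
  have hb : 0 < (1 / σ2 + c) / 2 := by positivity
  have hpt : ∀ x : EuclideanSpace ℝ (Fin d),
      ENNReal.ofReal (gaussPdf d σ2 x) * ENNReal.ofReal (Real.exp (-(c * ‖x‖ ^ 2) / 2)) =
        ENNReal.ofReal ((2 * π * σ2) ^ (-(d : ℝ) / 2)) *
          ENNReal.ofReal (Real.exp (-((1 / σ2 + c) / 2) * ‖x‖ ^ 2)) := by
    intro x
    rw [← ENNReal.ofReal_mul (gaussPdf_nonneg d hσ x), ← ENNReal.ofReal_mul (by positivity),
      gaussPdf, mul_assoc, ← Real.exp_add]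
    congr 3
    field_simp
    ring
  simp_rw [hpt]
  rw [lintegral_const_mul _ (by fun_prop), lintegral_exp_neg_mul_sq_norm d hb,
    ← ENNReal.ofReal_mul (by positivity)]
  congr 1
  have h1 : π / ((1 / σ2 + c) / 2) = (2 * π) * (1 / σ2 + c)⁻¹ := by
    field_simp
  rw [h1, Real.mul_rpow (x := 2 * π) (by positivity) hσ.le,
    Real.mul_rpow (x := 2 * π) (by positivity) (by positivity),
    Real.inv_rpow (by positivity), neg_div, Real.rpow_neg (by positivity : (0 : ℝ) ≤ 2 * π),
    Real.rpow_neg (by positivity : (0 : ℝ) ≤ 1 / σ2 + c)]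
  have h2 : (2 * π) ^ ((d : ℝ) / 2) ≠ 0 := by positivity
  field_simp

/-- The Gaussian convolution formula: integrating the squared-exponential kernel against an
isotropic Gaussian gives a squared-exponential kernel. -/
theorem lintegral_gaussPdf_mul_exp_sub (d : ℕ) {σ2 b : ℝ} (hσ : 0 < σ2) (hb : 0 < b)
    (x : EuclideanSpace ℝ (Fin d)) :
    ∫⁻ y, ENNReal.ofReal (gaussPdf d σ2 y) * ENNReal.ofReal (Real.exp (-(b * ‖x - y‖ ^ 2))) =
      ENNReal.ofReal ((1 / (2 * b)) ^ ((d : ℝ) / 2) *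
        (σ2 + 1 / (2 * b)) ^ (-(d : ℝ) / 2) *
        Real.exp (-((σ2 + 1 / (2 * b))⁻¹ * ‖x‖ ^ 2) / 2)) := by
  set A := 1 / (2 * σ2) with hA
  have hA0 : 0 < A := by positivity
  have hpt : ∀ y : EuclideanSpace ℝ (Fin d),
      ENNReal.ofReal (gaussPdf d σ2 y) * ENNReal.ofReal (Real.exp (-(b * ‖x - y‖ ^ 2))) =
        ENNReal.ofReal ((2 * π * σ2) ^ (-(d : ℝ) / 2) *
          Real.exp (-((σ2 + 1 / (2 * b))⁻¹ * ‖x‖ ^ 2) / 2)) *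
          ENNReal.ofReal (Real.exp (-(A + b) * ‖y - (b / (A + b)) • x‖ ^ 2)) := by
    intro y
    rw [← ENNReal.ofReal_mul (gaussPdf_nonneg d hσ y), ← ENNReal.ofReal_mul (by positivity),
      gaussPdf, mul_assoc _ (Real.exp _) (Real.exp _), mul_assoc _ (Real.exp _) (Real.exp _),
      ← Real.exp_add, ← Real.exp_add]
    congr 3
    rw [norm_sub_sq_real, norm_sub_sq_real, norm_smul, inner_smul_right, mul_pow,
      Real.norm_eq_abs, sq_abs, real_inner_comm x y, hA]
    field_simp
    ring
  simp_rw [hpt]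
  rw [lintegral_const_mul _ (by fun_prop),
    lintegral_sub_right_eq_self (μ := volume)
      (fun y : EuclideanSpace ℝ (Fin d) => ENNReal.ofReal (Real.exp (-(A + b) * ‖y‖ ^ 2))),
    lintegral_exp_neg_mul_sq_norm d (by positivity), ← ENNReal.ofReal_mul (by positivity)]
  congr 1
  rw [mul_right_comm]
  congr 1
  rw [neg_div, Real.rpow_neg (by positivity), Real.rpow_neg (by positivity),
    ← Real.inv_rpow (by positivity), ← Real.inv_rpow (by positivity),
    ← Real.mul_rpow (by positivity) (by positivity),
    ← Real.mul_rpow (by positivity) (by positivity)]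
  congr 1
  rw [hA]
  have := Real.pi_pos
  field_simp
  ring

theorem lintegral_gaussPdf (d : ℕ) {σ2 : ℝ} (hσ : 0 < σ2) :
    ∫⁻ x, ENNReal.ofReal (gaussPdf d σ2 x) = 1 := by
  have h := lintegral_gaussPdf_mul_exp d hσ le_rfl
  simp only [zero_mul, neg_zero, zero_div, Real.exp_zero, ENNReal.ofReal_one, mul_one,
    add_zero] at h
  rw [h, ← Real.mul_rpow hσ.le (by positivity), mul_one_div_cancel hσ.ne', Real.one_rpow,
    ENNReal.ofReal_one]

theorem Fin.prod_univ_erase {M : Type*} [CommMonoid M] {n : ℕ} (i : Fin (n + 1))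
    (f : Fin (n + 1) → M) :
    ∏ j ∈ Finset.univ.erase i, f j = ∏ j : Fin n, f (i.succAbove j) := by
  rw [← Finset.prod_image (f := f) (g := i.succAbove)
      (fun _ _ _ _ h => i.succAbove_right_injective h),
    Fin.image_succAbove_univ, Finset.compl_singleton]

/-- Tonelli's theorem for a product of functions of the individual coordinates. -/
theorem lintegral_fin_prod {E : Type*} [MeasureSpace E] [SigmaFinite (volume : Measure E)]
    {n : ℕ} (f : Fin n → E → ENNReal) (hf : ∀ j, Measurable (f j)) :
    ∫⁻ z : Fin n → E, ∏ j, f j (z j) = ∏ j, ∫⁻ x, f j x := by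
  induction n with
  | zero => simp [volume_pi]
  | succ n ih =>
    let F : E × (Fin n → E) → ENNReal := fun p => f 0 p.1 * ∏ j : Fin n, f j.succ (p.2 j)
    have hprod : Measurable fun w : Fin n → E => ∏ j : Fin n, f j.succ (w j) :=
      Finset.measurable_prod _ fun j _ => (hf j.succ).comp (measurable_pi_apply j)
    have hF : Measurable F := ((hf 0).comp measurable_fst).mul (hprod.comp measurable_snd)
    have h := (volume_preserving_piFinSuccAbove (fun _ => E) 0).lintegral_comp hF
    calc _ = ∫⁻ z : Fin (n + 1) → E, F (MeasurableEquiv.piFinSuccAbove (fun _ => E) 0 z) :=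
          lintegral_congr fun z => Fin.prod_univ_succ _
      _ = ∫⁻ p, F p := h
      _ = (∫⁻ x, f 0 x) * ∫⁻ w : Fin n → E, ∏ j : Fin n, f j.succ (w j) := by
          rw [Measure.volume_eq_prod]
          exact lintegral_prod_mul (hf 0).aemeasurable hprod.aemeasurable
      _ = _ := by rw [ih _ fun j => hf j.succ, Fin.prod_univ_succ]

/-- Tonelli's theorem for a star-shaped integrand: given the coordinate `i`, the integrand is a
product of functions of the other coordinates. -/
theorem lintegral_pi_star {E : Type*} [MeasureSpace E] [SigmaFinite (volume : Measure E)]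
    {n : ℕ} (i : Fin n) (f : E → ENNReal) (g : Fin n → E → E → ENNReal) (hf : Measurable f)
    (hg : ∀ j, Measurable (Function.uncurry (g j))) :
    ∫⁻ z : Fin n → E, f (z i) * ∏ j ∈ Finset.univ.erase i, g j (z i) (z j) =
      ∫⁻ x, f x * ∏ j ∈ Finset.univ.erase i, ∫⁻ y, g j x y := by
  obtain _ | n := n
  · exact i.elim0
  let F : E × (Fin n → E) → ENNReal := fun p =>
    f p.1 * ∏ j : Fin n, g (i.succAbove j) p.1 (p.2 j)
  have hF : Measurable F := by
    refine (hf.comp measurable_fst).mul (Finset.measurable_prod _ fun j _ => ?_)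
    exact (hg (i.succAbove j)).comp
      (measurable_fst.prodMk ((measurable_pi_apply j).comp measurable_snd))
  have h := (volume_preserving_piFinSuccAbove (fun _ => E) i).lintegral_comp hF
  calc _ = ∫⁻ z : Fin (n + 1) → E, F (MeasurableEquiv.piFinSuccAbove (fun _ => E) i z) := by
        refine lintegral_congr fun z => ?_
        rw [Fin.prod_univ_erase]
        rfl
    _ = ∫⁻ p, F p := h
    _ = ∫⁻ x, ∫⁻ w, F (x, w) := by
        rw [Measure.volume_eq_prod, lintegral_prod _ hF.aemeasurable]
    _ = _ := by
        refine lintegral_congr fun x => ?_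
        rw [Fin.prod_univ_erase]
        change ∫⁻ w : Fin n → E, f x * ∏ j : Fin n, g (i.succAbove j) x (w j) = _
        have hgx : ∀ j, Measurable (g (i.succAbove j) x) := fun j =>
          (hg (i.succAbove j)).comp measurable_prodMk_left
        rw [lintegral_const_mul (f x)
          (Finset.measurable_prod _ fun j _ => (hgx j).comp (measurable_pi_apply j) :
            Measurable fun w : Fin n → E => ∏ j : Fin n, g (i.succAbove j) x (w j)),
          lintegral_fin_prod _ hgx]

theorem lintegral_gaussPdf_mul_kernel_pow (d : ℕ) {σ2 β : ℝ} (hσ : 0 < σ2) (hβ : 0 < β) (a : ℝ)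
    (n : ℕ) (x : EuclideanSpace ℝ (Fin d)) :
    ∫⁻ y, ENNReal.ofReal (gaussPdf d σ2 y) *
        ENNReal.ofReal (Real.exp (a - β * ‖x - y‖ ^ 2)) ^ n =
      ENNReal.ofReal (Real.exp (a * n) *
        (if 0 < n then (1 / (2 * β * n)) ^ ((d : ℝ) / 2) *
          (σ2 + 1 / (2 * β * n)) ^ (-(d : ℝ) / 2) else 1) *
        Real.exp (-((if 0 < n then (σ2 + 1 / (2 * β * n))⁻¹ else 0) * ‖x‖ ^ 2) / 2)) := by
  obtain rfl | hn := Nat.eq_zero_or_pos n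
  · simp [lintegral_gaussPdf d hσ]
  have hn' : (0 : ℝ) < n := Nat.cast_pos.2 hn
  have hpt : ∀ y : EuclideanSpace ℝ (Fin d), ENNReal.ofReal (gaussPdf d σ2 y) *
        ENNReal.ofReal (Real.exp (a - β * ‖x - y‖ ^ 2)) ^ n =
      ENNReal.ofReal (Real.exp (a * n)) * (ENNReal.ofReal (gaussPdf d σ2 y) *
        ENNReal.ofReal (Real.exp (-(β * n * ‖x - y‖ ^ 2)))) := by
    intro y
    rw [mul_left_comm, ← ENNReal.ofReal_mul (Real.exp_pos _).le, ← Real.exp_add,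
      ← ENNReal.ofReal_pow (Real.exp_pos _).le, ← Real.exp_nat_mul]
    congr 3
    ring
  simp_rw [hpt]
  have hmeas := measurable_gaussPdf d σ2
  rw [lintegral_const_mul _ (by fun_prop),
    lintegral_gaussPdf_mul_exp_sub d hσ (mul_pos hβ hn') x,
    ← ENNReal.ofReal_mul (Real.exp_pos _).le, if_pos hn, if_pos hn, ← mul_assoc 2 β, ← mul_assoc]

/-- The integral of a monomial in the kernels `exp (a - β ‖Z_i - Z_j‖²)` against the Gaussian law
of the latent positions. -/
theorem lintegral_gaussPdf_kernel_monomial (d : ℕ) {N : ℕ} {σ2 β : ℝ} (hσ : 0 < σ2) (hβ : 0 < β)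
    (a : ℝ) (i : Fin N) (h : Fin N → ℕ) :
    ∫⁻ z : Fin N → EuclideanSpace ℝ (Fin d), ENNReal.ofReal (∏ l, gaussPdf d σ2 (z l)) *
        ∏ j ∈ Finset.univ.erase i,
          ENNReal.ofReal (Real.exp (a - β * ‖z i - z j‖ ^ 2)) ^ h j =
      ENNReal.ofReal (Real.exp (a * ∑ j ∈ Finset.univ.erase i, (h j : ℝ)) *
        σ2 ^ (-(d : ℝ) / 2) *
        (1 / σ2 + ∑ j ∈ (Finset.univ.erase i).filter (fun j => 0 < h j),
          (σ2 + 1 / (2 * β * (h j : ℝ)))⁻¹) ^ (-(d : ℝ) / 2) *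
        ∏ j ∈ (Finset.univ.erase i).filter (fun j => 0 < h j),
          (1 / (2 * β * (h j : ℝ))) ^ ((d : ℝ) / 2) *
            (σ2 + 1 / (2 * β * (h j : ℝ))) ^ (-(d : ℝ) / 2)) := by
  have hmeas := measurable_gaussPdf d σ2
  have hstar := lintegral_pi_star i (fun x => ENNReal.ofReal (gaussPdf d σ2 x))
    (fun j x y => ENNReal.ofReal (gaussPdf d σ2 y) *
      ENNReal.ofReal (Real.exp (a - β * ‖x - y‖ ^ 2)) ^ h j)
    (by fun_prop) (fun j => by unfold Function.uncurry; fun_prop)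
  have hpt : ∀ z : Fin N → EuclideanSpace ℝ (Fin d),
      ENNReal.ofReal (∏ l, gaussPdf d σ2 (z l)) * ∏ j ∈ Finset.univ.erase i,
          ENNReal.ofReal (Real.exp (a - β * ‖z i - z j‖ ^ 2)) ^ h j =
      ENNReal.ofReal (gaussPdf d σ2 (z i)) * ∏ j ∈ Finset.univ.erase i,
        (ENNReal.ofReal (gaussPdf d σ2 (z j)) *
          ENNReal.ofReal (Real.exp (a - β * ‖z i - z j‖ ^ 2)) ^ h j) := by
    intro z
    rw [ENNReal.ofReal_prod_of_nonneg fun l _ => gaussPdf_nonneg d hσ (z l),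
      ← Finset.mul_prod_erase _ _ (Finset.mem_univ i), Finset.prod_mul_distrib, mul_assoc]
  simp_rw [hpt]
  rw [hstar]
  simp_rw [lintegral_gaussPdf_mul_kernel_pow d hσ hβ]
  set c := ∑ j ∈ (Finset.univ.erase i).filter (fun j => 0 < h j),
    (σ2 + 1 / (2 * β * (h j : ℝ)))⁻¹ with hc
  set C := ∏ j ∈ (Finset.univ.erase i).filter (fun j => 0 < h j),
    (1 / (2 * β * (h j : ℝ))) ^ ((d : ℝ) / 2) *
      (σ2 + 1 / (2 * β * (h j : ℝ))) ^ (-(d : ℝ) / 2) with hC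
  have hc0 : 0 ≤ c := Finset.sum_nonneg fun j _ => by positivity
  have hC0 : 0 ≤ C := Finset.prod_nonneg fun j _ => by positivity
  have hprod : ∀ x : EuclideanSpace ℝ (Fin d), ∏ j ∈ Finset.univ.erase i,
      ENNReal.ofReal (Real.exp (a * (h j : ℝ)) *
        (if 0 < h j then (1 / (2 * β * (h j : ℝ))) ^ ((d : ℝ) / 2) *
          (σ2 + 1 / (2 * β * (h j : ℝ))) ^ (-(d : ℝ) / 2) else 1) *
        Real.exp (-((if 0 < h j then (σ2 + 1 / (2 * β * (h j : ℝ)))⁻¹ else 0) * ‖x‖ ^ 2) / 2)) =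
      ENNReal.ofReal (Real.exp (a * ∑ j ∈ Finset.univ.erase i, (h j : ℝ)) * C) *
        ENNReal.ofReal (Real.exp (-(c * ‖x‖ ^ 2) / 2)) := by
    intro x
    rw [← ENNReal.ofReal_prod_of_nonneg fun j _ => by positivity,
      ← ENNReal.ofReal_mul (by positivity), Finset.prod_mul_distrib, Finset.prod_mul_distrib,
      ← Finset.prod_filter, ← Real.exp_sum, ← Real.exp_sum, ← Finset.mul_sum, ← hC,
      ← Finset.sum_div, Finset.sum_neg_distrib, ← Finset.sum_mul, ← Finset.sum_filter, ← hc]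
  simp_rw [hprod, mul_left_comm (ENNReal.ofReal (gaussPdf d σ2 _))]
  rw [lintegral_const_mul _ (by fun_prop), lintegral_gaussPdf_mul_exp d hσ hc0,
    ← ENNReal.ofReal_mul (by positivity)]
  congr 1
  ring

/-- The endpoint of the pair `p` other than `i`, or `i` itself if `i` is not an endpoint. -/
def Pairs.other {N : ℕ} (i : Fin N) (p : Pairs N) : Fin N :=
  if p.1.1 = i then p.1.2 else if p.1.2 = i then p.1.1 else i

theorem Pairs.endpoints_of_other_ne {N : ℕ} {i : Fin N} {p : Pairs N} (hp : p.other i ≠ i) :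
    p.1 = (i, p.other i) ∨ p.1 = (p.other i, i) := by
  obtain ⟨⟨u, v⟩, huv⟩ := p
  unfold Pairs.other at *
  dsimp only at *
  split_ifs at * with h1 h2
  · exact Or.inl (by rw [h1])
  · exact Or.inr (by rw [h2])
  · exact absurd rfl hp

theorem Pairs.prod_eq_prod_erase {N : ℕ} {M : Type*} [CommMonoid M] (i : Fin N) (f : Fin N → M)
    (g : Pairs N → M) (hg : ∀ p, p.other i ≠ i → g p = f (p.other i))
    (hg' : ∀ p, p.other i = i → g p = 1) :
    ∏ p, g p = ∏ j ∈ Finset.univ.erase i, f j := by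
  rw [← Finset.prod_filter_of_ne (p := fun p : Pairs N => p.other i ≠ i)
    fun p _ hp hpi => hp (hg' p hpi)]
  refine Finset.prod_bij (fun p _ => p.other i) (fun p hp => ?_) (fun p hp p' hp' hpp => ?_)
    (fun j hj => ?_) (fun p hp => hg p (Finset.mem_filter.1 hp).2)
  · simpa using hp
  · have h1 := (Finset.mem_filter.1 hp).2
    have h2 := (Finset.mem_filter.1 hp').2
    have hlt := p.2
    have hlt' := p'.2
    apply Subtype.ext
    rcases endpoints_of_other_ne h1 with e | e <;> rcases endpoints_of_other_ne h2 with e' | e'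
    · rw [e, e', hpp]
    · rw [e] at hlt
      rw [e', ← hpp] at hlt'
      exact absurd hlt hlt'.asymm
    · rw [e] at hlt
      rw [e', ← hpp] at hlt'
      exact absurd hlt hlt'.asymm
    · rw [e, e', hpp]
  · have hji : j ≠ i := by simpa using hj
    rcases lt_or_gt_of_ne hji with h | h
    · have ho : Pairs.other i ⟨(j, i), h⟩ = j := by simp [Pairs.other, hji]
      exact ⟨⟨(j, i), h⟩, by simp [ho, hji], ho⟩
    · have ho : Pairs.other i ⟨(i, j), h⟩ = j := by simp [Pairs.other]
      exact ⟨⟨(i, j), h⟩, by simp [ho, hji], ho⟩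

theorem lintegral_jointLaw_comp_snd (d N : ℕ) (β : ℝ) (α : Fin N → ℝ) (σ2 : ℝ)
    (G : (Pairs N → ℕ) → ENNReal) :
    ∫⁻ w, G w.2 ∂jointLaw d N β α σ2 =
      ∫⁻ z : Fin N → EuclideanSpace ℝ (Fin d), ENNReal.ofReal (∏ l, gaussPdf d σ2 (z l)) *
        ∫⁻ y, G y ∂Measure.pi fun p : Pairs N => poissonMeasure
          (Real.exp (α p.1.1 + α p.1.2 - β * ‖z p.1.1 - z p.1.2‖ ^ 2)).toNNReal := by
  have hG : Measurable fun w : (Fin N → EuclideanSpace ℝ (Fin d)) × (Pairs N → ℕ) => G w.2 :=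
    (measurable_of_countable G).comp measurable_snd
  have hmeas := measurable_gaussPdf d σ2
  have hr := measurable_pi_poissonMeasure_map
    (fun (z : Fin N → EuclideanSpace ℝ (Fin d)) (p : Pairs N) =>
      (Real.exp (α p.1.1 + α p.1.2 - β * ‖z p.1.1 - z p.1.2‖ ^ 2)).toNNReal)
    (fun p => by fun_prop)
  have hlint : ∀ z : Fin N → EuclideanSpace ℝ (Fin d),
      ∫⁻ w, G w.2 ∂((Measure.pi fun p : Pairs N => poissonMeasure
          (Real.exp (α p.1.1 + α p.1.2 - β * ‖z p.1.1 - z p.1.2‖ ^ 2)).toNNReal).map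
            fun y => (z, y)) =
        ∫⁻ y, G y ∂Measure.pi fun p : Pairs N => poissonMeasure
          (Real.exp (α p.1.1 + α p.1.2 - β * ‖z p.1.1 - z p.1.2‖ ^ 2)).toNNReal :=
    fun z => lintegral_map hG (measurable_of_countable _)
  have hml := (Measure.measurable_lintegral hG).comp hr
  simp only [Function.comp_def, hlint] at hml
  rw [jointLaw, Measure.lintegral_bind hr.aemeasurable hG.aemeasurable]
  simp_rw [hlint]
  exact lintegral_withDensity_eq_lintegral_mul _ (by fun_prop) hml

theorem lintegral_prod_descFactorial_pi_poissonMeasure {d N : ℕ} {β a : ℝ} {α : Fin N → ℝ}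
    (hα : ∀ i j, α i + α j = a) (i : Fin N) (h : Fin N → ℕ) (hi : h i = 0)
    (z : Fin N → EuclideanSpace ℝ (Fin d)) :
    ∫⁻ y, ∏ p : Pairs N, ((y p).descFactorial (h (p.other i)) : ENNReal)
        ∂(Measure.pi fun p : Pairs N => poissonMeasure
          (Real.exp (α p.1.1 + α p.1.2 - β * ‖z p.1.1 - z p.1.2‖ ^ 2)).toNNReal) =
      ∏ j ∈ Finset.univ.erase i, ENNReal.ofReal (Real.exp (a - β * ‖z i - z j‖ ^ 2)) ^ h j := by
  rw [lintegral_pi_prod (fun p : Pairs N => poissonMeasure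
      (Real.exp (α p.1.1 + α p.1.2 - β * ‖z p.1.1 - z p.1.2‖ ^ 2)).toNNReal)
    (f := fun p n => (n.descFactorial (h (p.other i)) : ENNReal))
    fun p => measurable_of_countable _]
  simp_rw [lintegral_descFactorial_poissonMeasure]
  refine Pairs.prod_eq_prod_erase i _ _ (fun p hp => ?_) (fun p hp => by simp [hp, hi])
  rw [hα]
  rcases Pairs.endpoints_of_other_ne hp with e | e
  · rw [e]
    rfl
  · rw [e, norm_sub_rev]
    rfl

theorem MSLS.descFactorial_strength {Ω : Type} [MeasurableSpace Ω] (M : MSLS Ω) (i : Fin M.N)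
    (t m : ℕ) (ω : Ω) :
    (M.strength i t ω).descFactorial m =
      ∑ h ∈ (Finset.Nat.antidiagonalTuple M.N m).filter (fun h => h i = 0),
        Nat.multinomial (Finset.univ.erase i) h *
          ∏ p : Pairs M.N, (M.Y p.1.1 p.1.2 t ω).descFactorial (h (p.other i)) := by
  rw [MSLS.strength, Nat.descFactorial_sum]
  refine Finset.sum_congr rfl fun h hh => ?_
  congr 1
  symm
  refine Pairs.prod_eq_prod_erase i _ _ (fun p hp => ?_)
    (fun p hp => by simp [hp, (Finset.mem_filter.1 hh).2])
  rcases Pairs.endpoints_of_other_ne hp with e | e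
  · rw [e]
  · rw [e, M.Y_symm]

/-- Under the MS-LS model with `α_i + α_j = α` for all pairs, the `m`-th
factorial moment of the nodal strength within state `k` equals
`Σ_{h ∈ H_i} binom(m; h) e^{αm} (σ_k²)^{-d/2} (1/σ_k² + Σ_{j∈N_i} τ_{kj}⁻¹)^{-d/2}
  Π_{j∈N_i} (1/(2βh_j))^{d/2} τ_{kj}^{-d/2}`, with `τ_{kj} = σ_k² + 1/(2βh_j)`,
`H_i` the multi-indices `(h_j)_{j≠i}` of nonnegative integers summing to `m`, and
`N_i = {j ≠ i : h_j > 0}`. -/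
theorem statement14 {Ω : Type} [MeasurableSpace Ω] (M : MSLS Ω) (a : ℝ)
    (hα : ∀ i j, M.α i + M.α j = a) (i : Fin M.N) (t : ℕ) (k : Fin M.K)
    (m : ℕ) (hm : 1 ≤ m) :
    ∫ ω, (Nat.descFactorial (M.strength i t ω) m : ℝ) ∂(M.P[|{ω | M.s t ω = k}]) =
      ∑ h ∈ (Finset.Nat.antidiagonalTuple M.N m).filter (fun h => h i = 0),
        (Nat.multinomial (Finset.univ.erase i) h : ℝ) * Real.exp (a * (m : ℝ)) *
          (M.σ2 k) ^ (-(M.d : ℝ) / 2) *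
          (1 / M.σ2 k +
              ∑ j ∈ (Finset.univ.erase i).filter (fun j => 0 < h j),
                (M.σ2 k + 1 / (2 * M.β * (h j : ℝ)))⁻¹) ^ (-(M.d : ℝ) / 2) *
          ∏ j ∈ (Finset.univ.erase i).filter (fun j => 0 < h j),
            (1 / (2 * M.β * (h j : ℝ))) ^ ((M.d : ℝ) / 2) *
              (M.σ2 k + 1 / (2 * M.β * (h j : ℝ))) ^ (-(M.d : ℝ) / 2) := by
  have hσ := M.σ2_pos k
  have hβ := M.β_pos
  set S := (Finset.Nat.antidiagonalTuple M.N m).filter (fun h => h i = 0) with hS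
  let G : (Pairs M.N → ℕ) → ENNReal := fun y =>
    ∑ h ∈ S, (Nat.multinomial (Finset.univ.erase i) h : ENNReal) *
      ∏ p : Pairs M.N, ((y p).descFactorial (h (p.other i)) : ENNReal)
  have hGY : ∀ ω, ENNReal.ofReal ((M.strength i t ω).descFactorial m : ℝ) =
      G fun p => M.Y p.1.1 p.1.2 t ω := by
    intro ω
    rw [ENNReal.ofReal_natCast, M.descFactorial_strength]
    push_cast
    rfl
  have hstrength : Measurable (M.strength i t) := by
    have := M.Y_meas
    unfold MSLS.strength
    fun_prop
  have hmap : Measurable fun ω =>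
      ((fun j => M.Z j k ω), fun p : Pairs M.N => M.Y p.1.1 p.1.2 t ω) :=
    (measurable_pi_lambda _ fun j => M.Z_meas j k).prodMk
      (measurable_pi_lambda _ fun p => M.Y_meas _ _ _)
  rw [integral_eq_lintegral_of_nonneg_ae (ae_of_all _ fun ω => Nat.cast_nonneg _)
    ((measurable_of_countable fun n : ℕ => (n.descFactorial m : ℝ)).comp
      hstrength).aestronglyMeasurable]
  simp_rw [hGY]
  rw [← lintegral_map (f := fun w : (Fin M.N → EuclideanSpace ℝ (Fin M.d)) × (Pairs M.N → ℕ) =>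
      G w.2) ((measurable_of_countable G).comp measurable_snd) hmap, M.cond_law_state,
    lintegral_jointLaw_comp_snd]
  have hmeas := measurable_gaussPdf M.d (M.σ2 k)
  have hinner : ∀ z : Fin M.N → EuclideanSpace ℝ (Fin M.d),
      ENNReal.ofReal (∏ l, gaussPdf M.d (M.σ2 k) (z l)) *
        ∫⁻ y, G y ∂(Measure.pi fun p : Pairs M.N => poissonMeasure
          (Real.exp (M.α p.1.1 + M.α p.1.2 - M.β * ‖z p.1.1 - z p.1.2‖ ^ 2)).toNNReal) =
      ∑ h ∈ S, (Nat.multinomial (Finset.univ.erase i) h : ENNReal) *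
        (ENNReal.ofReal (∏ l, gaussPdf M.d (M.σ2 k) (z l)) *
          ∏ j ∈ Finset.univ.erase i,
            ENNReal.ofReal (Real.exp (a - M.β * ‖z i - z j‖ ^ 2)) ^ h j) := by
    intro z
    rw [lintegral_finsetSum _ fun h _ => measurable_of_countable _, Finset.mul_sum]
    refine Finset.sum_congr rfl fun h hh => ?_
    rw [lintegral_const_mul _ (measurable_of_countable _),
      lintegral_prod_descFactorial_pi_poissonMeasure hα i h (Finset.mem_filter.1 hh).2,
      mul_left_comm]
  simp_rw [hinner]
  rw [lintegral_finsetSum _ fun h _ => by fun_prop, ENNReal.toReal_sum]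
  · refine Finset.sum_congr rfl fun h hh => ?_
    rw [Finset.mem_filter, Finset.Nat.mem_antidiagonalTuple,
      ← Finset.add_sum_erase _ _ (Finset.mem_univ i)] at hh
    have hsum : ∑ j ∈ Finset.univ.erase i, (h j : ℝ) = m := by
      rw [← hh.1, hh.2, zero_add, Nat.cast_sum]
    rw [lintegral_const_mul _ (by fun_prop), lintegral_gaussPdf_kernel_monomial M.d hσ hβ, hsum,
      ENNReal.toReal_mul, ENNReal.toReal_natCast, ENNReal.toReal_ofReal]
    · ring
    · have hc : 0 ≤ ∑ j ∈ (Finset.univ.erase i).filter (fun j => 0 < h j),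
          (M.σ2 k + 1 / (2 * M.β * (h j : ℝ)))⁻¹ := Finset.sum_nonneg fun j _ => by positivity
      have hC : 0 ≤ ∏ j ∈ (Finset.univ.erase i).filter (fun j => 0 < h j),
          (1 / (2 * M.β * (h j : ℝ))) ^ ((M.d : ℝ) / 2) *
            (M.σ2 k + 1 / (2 * M.β * (h j : ℝ))) ^ (-(M.d : ℝ) / 2) :=
        Finset.prod_nonneg fun j _ => by positivity
      positivity
  · intro h _
    rw [lintegral_const_mul _ (by fun_prop), lintegral_gaussPdf_kernel_monomial M.d hσ hβ]
    exact ENNReal.mul_ne_top (ENNReal.natCast_ne_top _) ENNReal.ofReal_ne_top
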